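/- Fix an integer d ≥ 1, p ∈ (1,∞), a penalty function φ, and let (μ_t)_{t≥0} be a convolution semigroup in 𝒫_p(ℝ^d). Then for every 0 < s < t and every f ∈ C₀(ℝ^d), S(s)(S(t−s)f)(x) ≤ S(t)f(x) for all x ∈ ℝ^d. -/

import Mathlib

open MeasureTheory Filter Topology ENNReal NNReal Set ZeroAtInfty
noncomputable section

/-- Euclidean space ℝ^d. -/
abbrev Ed (d : ℕ) := EuclideanSpace ℝ (Fin d)

/-- `𝒫_p(ℝ^d)`: Borel probability measures with finite `p`-th moment. -/
def MemPp {d : ℕ} (p : ℝ) (μ : Measure (Ed d)) : Prop :=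
  IsProbabilityMeasure μ ∧ ∫⁻ x, (‖x‖₊ : ℝ≥0∞) ^ p ∂μ < ∞

/-- `γ` is a coupling of `μ` and `ν`. -/
def IsCoupling {d : ℕ} (γ : Measure (Ed d × Ed d)) (μ ν : Measure (Ed d)) : Prop :=
  γ.map Prod.fst = μ ∧ γ.map Prod.snd = ν

/-- The `p`-Wasserstein distance `𝒲_p(μ, ν)`. -/
def Wp {d : ℕ} (p : ℝ) (μ ν : Measure (Ed d)) : ℝ :=
  (⨅ γ ∈ {γ : Measure (Ed d × Ed d) | IsCoupling γ μ ν},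
    (∫⁻ q, (‖q.2 - q.1‖₊ : ℝ≥0∞) ^ p ∂γ) ^ (1 / p)).toReal

/-- The scaled penalty `φ_t(r) = t·φ(r/t)` for `t > 0`; `φ_0(0) = 0`, `φ_0(r) = ∞` for `r > 0`. -/
def phit (φ : ℝ≥0 → ℝ≥0∞) (t : ℝ) (r : ℝ≥0) : ℝ≥0∞ :=
  if 0 < t then (t.toNNReal : ℝ≥0∞) * φ (r / t.toNNReal) else (if r = 0 then 0 else ∞)

/-- `φ` is a penalty function: lower semicontinuous, convex, increasing, not constant,
`φ(0) = 0`, and `x ↦ φ(x^{1/p})` is convex. -/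
structure IsPenalty (p : ℝ) (φ : ℝ≥0 → ℝ≥0∞) : Prop where
  lsc : LowerSemicontinuous φ
  convex : ∀ a b l m : ℝ≥0, l + m = 1 →
    φ (l * a + m * b) ≤ (l : ℝ≥0∞) * φ a + (m : ℝ≥0∞) * φ b
  mono : Monotone φ
  not_const : ∃ a b, φ a ≠ φ b
  map_zero : φ 0 = 0
  convex_rpow : ∀ a b l m : ℝ≥0, l + m = 1 →
    φ ((l * a + m * b) ^ (1 / p)) ≤ (l : ℝ≥0∞) * φ (a ^ (1 / p)) + (m : ℝ≥0∞) * φ (b ^ (1 / p))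

/-- The convex conjugate `φ*(y) = sup_{x ≥ 0} (xy − φ(x))`. -/
def phiStar (φ : ℝ≥0 → ℝ≥0∞) (y : ℝ≥0) : ℝ≥0∞ :=
  ⨆ x : ℝ≥0, ((x * y : ℝ≥0) : ℝ≥0∞) - φ x

/-- The one-step operator `S(t)f(x) = sup_ν ( ∫ f(x+y) ν(dy) − φ_t(𝒲_p(μ_t, ν)) )`. -/
def Sop {d : ℕ} (p : ℝ) (φ : ℝ≥0 → ℝ≥0∞) (μt : Measure (Ed d)) (t : ℝ)
    (f : Ed d → ℝ) (x : Ed d) : ℝ :=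
  sSup { r : ℝ | ∃ ν : Measure (Ed d), MemPp p ν ∧ ∃ c : ℝ, 0 ≤ c ∧
    phit φ t (Wp p μt ν).toNNReal ≤ ENNReal.ofReal c ∧ r = (∫ y, f (x + y) ∂ν) - c }

/-- The iterated operator `𝒮ⁿ(t) = S(2⁻ⁿ)^{∘ k} ∘ S(t − k·2⁻ⁿ)`, `k = ⌊2ⁿ t⌋`. -/
def SiterN {d : ℕ} (p : ℝ) (φ : ℝ≥0 → ℝ≥0∞) (μ : ℝ → Measure (Ed d)) (n : ℕ) (t : ℝ)
    (f : Ed d → ℝ) : Ed d → ℝ :=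
  (fun g => Sop p φ (μ ((2 : ℝ) ^ n)⁻¹) ((2 : ℝ) ^ n)⁻¹ g)^[⌊(2:ℝ)^n * t⌋₊]
    (Sop p φ (μ (t - ⌊(2:ℝ)^n * t⌋₊ * ((2:ℝ)^n)⁻¹)) (t - ⌊(2:ℝ)^n * t⌋₊ * ((2:ℝ)^n)⁻¹) f)

/-- The limiting operator `𝒮(t)f = lim_n 𝒮ⁿ(t)f` (a decreasing limit, i.e. an infimum). -/
def Slim {d : ℕ} (p : ℝ) (φ : ℝ≥0 → ℝ≥0∞) (μ : ℝ → Measure (Ed d)) (t : ℝ)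
    (f : Ed d → ℝ) (x : Ed d) : ℝ :=
  ⨅ n : ℕ, SiterN p φ μ n t f x

/-- `f ∈ C₀(ℝ^d)`: continuous and vanishing at infinity. -/
def IsC0 {d : ℕ} (f : Ed d → ℝ) : Prop :=
  Continuous f ∧ Tendsto f (cocompact (Ed d)) (𝓝 0)

/-- `(μ_t)_{t ≥ 0}` is a convolution semigroup in `𝒫_p(ℝ^d)`. -/
def IsConvSemigroup {d : ℕ} (p : ℝ) (μ : ℝ → Measure (Ed d)) : Prop :=
  μ 0 = Measure.dirac 0 ∧ (∀ s t : ℝ, 0 ≤ s → 0 ≤ t → μ (s + t) = (μ s).conv (μ t)) ∧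
    ∀ t : ℝ, 0 ≤ t → MemPp p (μ t)

/-- `𝒲_p(μ_t, δ_0) → 0` as `t ↓ 0`. -/
def WContinuousAtZero {d : ℕ} (p : ℝ) (μ : ℝ → Measure (Ed d)) : Prop :=
  Tendsto (fun t => Wp p (μ t) (Measure.dirac 0)) (𝓝[>] (0:ℝ)) (𝓝 0)

/-- The semigroup of the underlying Lévy process, `S^μ(t)f(x) = ∫ f(x+y) μ_t(dy)`. -/
def Smu {d : ℕ} (μ : ℝ → Measure (Ed d)) (t : ℝ) (f : Ed d → ℝ) (x : Ed d) : ℝ :=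
  ∫ y, f (x + y) ∂(μ t)

/-- `f ∈ D(A^μ)` with `A^μ f = Af`: `(S^μ(t)f − f)/t → Af` uniformly as `t ↓ 0`. -/
def HasGenerator {d : ℕ} (μ : ℝ → Measure (Ed d)) (f Af : Ed d → ℝ) : Prop :=
  TendstoUniformly (fun t x => (Smu μ t f x - f x) / t) Af (𝓝[>] (0:ℝ))

/-- `f ∈ C₀¹(ℝ^d)`: continuously differentiable, vanishing at infinity, with gradient
vanishing at infinity. -/
def IsC01 {d : ℕ} (f : Ed d → ℝ) : Prop :=
  IsC0 f ∧ ContDiff ℝ 1 f ∧ Tendsto (fun x => gradient f x) (cocompact (Ed d)) (𝓝 0)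

/-!
A measure `ν` in the outer supremum and a choice `y ↦ κ y` of measures in the inner one are glued
to the law `ν ⋆ κ` of `Y + Z`, where `Y ~ ν` and `Z ~ κ y` given `Y = y`. Gluing couplings in the
same way, Minkowski's inequality gives
`𝒲_p(μ₁ ∗ μ₂, ν ⋆ κ) ≤ 𝒲_p(μ₁, ν) + (∫ 𝒲_p(μ₂, κ y)^p ν(dy))^{1/p}`. Convexity of `φ` splits the
penalty `φ_{s+u}` of the right-hand side into `φ_s` of the first term and `φ_u` of the second, and
Jensen's inequality for `x ↦ φ_u(x^{1/p})` bounds the latter by `∫ φ_u(𝒲_p(μ₂, κ y)) ν(dy)`; hence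
`ν ⋆ κ` does at least as well in `S(s+u)f` as `ν` followed by `κ`.

No measurable selection theorem is needed: the inner payoffs are continuous in the starting point,
so `S(u)f` is the supremum of countably many of them, its finite partial suprema are attained by
choices `κ` with finitely many values, and monotone convergence passes to the supremum.
-/

open ProbabilityTheory BoundedContinuousFunction

section Jensen

variable {E β ι α : Type*} [AddCommMonoid E] [Module ℝ≥0 E] [AddCommMonoid β] [PartialOrder β]
  [IsOrderedAddMonoid β] [Module ℝ≥0 β] [PosSMulMono ℝ≥0 β]

lemma sum_smul_eq_smul_sum_inv_mul_smul (S : Finset ι) {w : ι → ℝ≥0} (hw : ∑ i ∈ S, w i ≠ 0)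
    (a : ι → E) :
    ∑ i ∈ S, w i • a i = (∑ i ∈ S, w i) • ∑ i ∈ S, ((∑ j ∈ S, w j)⁻¹ * w i) • a i := by
  simp_rw [mul_smul, ← Finset.smul_sum]
  rw [smul_inv_smul₀ hw]

lemma map_sum_smul_le_of_convexOn {ψ : E → β} (hψ : ConvexOn ℝ≥0 univ ψ) (S : Finset ι)
    (w : ι → ℝ≥0) (a : ι → E) (hw : ∑ i ∈ S, w i = 1) :
    ψ (∑ i ∈ S, w i • a i) ≤ ∑ i ∈ S, w i • ψ (a i) := by
  classical
  induction S using Finset.induction_on generalizing w with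
  | empty => simp at hw
  | insert j S hj ih =>
    rw [Finset.sum_insert hj] at hw ⊢
    rw [Finset.sum_insert hj]
    set W := ∑ i ∈ S, w i with hW
    rcases eq_or_ne W 0 with hW₀ | hW₀
    · have hw₀ : ∀ i ∈ S, w i = 0 := Finset.sum_eq_zero_iff.1 hW₀
      rw [Finset.sum_eq_zero fun i hi => by rw [hw₀ i hi, zero_smul],
        Finset.sum_eq_zero fun i hi => by rw [hw₀ i hi, zero_smul]]
      simp [show w j = 1 by simpa [hW₀] using hw]
    · rw [sum_smul_eq_smul_sum_inv_mul_smul S hW₀ a,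
        sum_smul_eq_smul_sum_inv_mul_smul S hW₀ fun i => ψ (a i), ← hW]
      calc ψ (w j • a j + W • ∑ i ∈ S, (W⁻¹ * w i) • a i)
          ≤ w j • ψ (a j) + W • ψ (∑ i ∈ S, (W⁻¹ * w i) • a i) :=
            hψ.2 (mem_univ _) (mem_univ _) zero_le zero_le hw
        _ ≤ w j • ψ (a j) + W • ∑ i ∈ S, (W⁻¹ * w i) • ψ (a i) := by
            gcongr
            exact ih _ (by rw [← Finset.mul_sum, ← hW, inv_mul_cancel₀ hW₀])

lemma map_lintegral_simpleFunc_le_of_convexOn [MeasurableSpace α] {ψ : ℝ≥0 → ℝ≥0∞}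
    (hψ : ConvexOn ℝ≥0 univ ψ) (ν : Measure α) [IsProbabilityMeasure ν] (w : SimpleFunc α ℝ≥0) :
    ψ (∫⁻ a, w a ∂ν).toNNReal ≤ ∫⁻ a, ψ (w a) ∂ν := by
  set m : ℝ≥0 → ℝ≥0 := fun r => (ν (w ⁻¹' {r})).toNNReal
  have lintegral_comp (g : ℝ≥0 → ℝ≥0∞) : ∫⁻ a, g (w a) ∂ν = ∑ r ∈ w.range, m r • g r := by
    refine ((w.map g).lintegral_eq_lintegral ν).trans ?_
    simp_rw [SimpleFunc.map_lintegral, ENNReal.smul_def, smul_eq_mul, mul_comm, m,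
      ENNReal.coe_toNNReal (measure_ne_top ν _)]
  have sum_m : ∑ r ∈ w.range, m r = 1 := by
    have := lintegral_comp fun _ => 1
    simp only [lintegral_one, measure_univ, ENNReal.smul_def, smul_eq_mul, mul_one] at this
    exact_mod_cast this.symm
  have mean : (∫⁻ a, w a ∂ν).toNNReal = ∑ r ∈ w.range, m r • r := by
    rw [lintegral_comp fun r => r]
    simp only [ENNReal.smul_def, smul_eq_mul]
    exact_mod_cast ENNReal.toNNReal_coe _
  rw [mean, lintegral_comp ψ]
  exact map_sum_smul_le_of_convexOn hψ w.range m id sum_m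

end Jensen

section ConvKernel

variable {M N F : Type*} [MeasurableSpace M] [AddMonoid M] [MeasurableSpace N] [AddMonoid N]

/-- The law of `Y + Z` when `Y` has law `ν` and `Z`, conditionally on `Y = y`, has law `κ y`.
For a constant kernel this is the convolution of measures. -/
def convKernel (ν : Measure M) (κ : Kernel M M) : Measure M :=
  (ν ⊗ₘ κ).map (fun q => q.1 + q.2)

lemma convKernel_const (ν μ : Measure M) [SFinite ν] [SFinite μ] :
    convKernel ν (Kernel.const M μ) = ν.conv μ := by
  rw [convKernel, Measure.compProd_const, Measure.conv]

variable [MeasurableAdd₂ M] [MeasurableAdd₂ N]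

instance isProbabilityMeasure_convKernel (ν : Measure M) [IsProbabilityMeasure ν]
    (κ : Kernel M M) [IsMarkovKernel κ] : IsProbabilityMeasure (convKernel ν κ) :=
  Measure.isProbabilityMeasure_map (by fun_prop)

lemma lintegral_convKernel (ν : Measure M) [SFinite ν] (κ : Kernel M M) [IsSFiniteKernel κ]
    {g : M → ℝ≥0∞} (hg : Measurable g) :
    ∫⁻ a, g a ∂(convKernel ν κ) = ∫⁻ y, ∫⁻ z, g (y + z) ∂(κ y) ∂ν := by
  rw [convKernel, lintegral_map hg (by fun_prop), Measure.lintegral_compProd (by fun_prop)]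

lemma map_convKernel (T : M →+ N) (hT : Measurable T) (ν : Measure M) [SFinite ν]
    (κ : Kernel M M) [IsSFiniteKernel κ] (η : Kernel N N) [IsSFiniteKernel η]
    (hη : ∀ y, (κ y).map T = η (T y)) :
    (convKernel ν κ).map T = convKernel (ν.map T) η := by
  refine Measure.ext_of_lintegral _ fun g hg => ?_
  have inner_measurable : Measurable fun y => ∫⁻ z, g (y + z) ∂(η y) :=
    Measurable.lintegral_kernel_prod_right' (f := fun q : N × N => g (q.1 + q.2)) (by fun_prop)
  rw [lintegral_map hg hT, lintegral_convKernel ν κ (g := fun y => g (T y)) (hg.comp hT),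
    lintegral_convKernel _ η hg, lintegral_map inner_measurable hT]
  refine lintegral_congr fun y => ?_
  rw [← hη, lintegral_map (by fun_prop) hT]
  simp only [map_add]

lemma eLpNorm'_convKernel_le [NormedAddCommGroup F] [MeasurableSpace F] [BorelSpace F]
    [SecondCountableTopology F] {p : ℝ} (hp : 1 ≤ p) (T : M →+ F) (hT : Measurable T)
    (ν : Measure M) [SFinite ν] (κ : Kernel M M) [IsMarkovKernel κ] :
    eLpNorm' T p (convKernel ν κ) ≤
      eLpNorm' T p ν + eLpNorm' (fun y => eLpNorm' T p (κ y)) p ν := by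
  have hp₀ : 0 < p := by positivity
  have map_add_eq : eLpNorm' T p (convKernel ν κ) =
      eLpNorm' ((fun q => T q.1) + fun q => T q.2) p (ν ⊗ₘ κ) := by
    rw [eLpNorm', convKernel, lintegral_map (by fun_prop) (by fun_prop)]
    simp [eLpNorm']
  rw [map_add_eq]
  refine (eLpNorm'_add_le (hT.comp measurable_fst).aestronglyMeasurable
    (hT.comp measurable_snd).aestronglyMeasurable hp).trans_eq ?_
  congr 1
  · simp_rw [eLpNorm']
    rw [Measure.lintegral_compProd (by fun_prop)]
    simp
  · simp_rw [eLpNorm'_eq_lintegral_enorm]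
    rw [Measure.lintegral_compProd (by fun_prop)]
    simp [← ENNReal.rpow_mul, hp₀.ne']

lemma integrable_add_compProd {ν : Measure M} {κ : Kernel M M} {g : M → ℝ}
    (hg : Integrable g (convKernel ν κ)) :
    Integrable (fun q : M × M => g (q.1 + q.2)) (ν ⊗ₘ κ) :=
  hg.comp_measurable (by fun_prop)

variable {ν : Measure M} [SFinite ν] {κ : Kernel M M} [IsSFiniteKernel κ] {g : M → ℝ}

lemma integral_convKernel (hg : Integrable g (convKernel ν κ)) :
    ∫ a, g a ∂(convKernel ν κ) = ∫ y, ∫ z, g (y + z) ∂(κ y) ∂ν := by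
  rw [convKernel, integral_map (by fun_prop) hg.aestronglyMeasurable,
    Measure.integral_compProd (integrable_add_compProd hg)]

lemma integrable_integral_add_of_integrable_convKernel (hg : Integrable g (convKernel ν κ)) :
    Integrable (fun y => ∫ z, g (y + z) ∂(κ y)) ν :=
  MeasureTheory.Integrable.integral_compProd (κ := Kernel.const Unit ν)
    (η := Kernel.prodMkLeft Unit κ) (a := ()) (integrable_add_compProd hg)

end ConvKernel

section SimpleKernel

variable {α β : Type*} [MeasurableSpace α] [MeasurableSpace β]

/-- A measure-valued simple function, regarded as a kernel. -/
def simpleKernel (κ : SimpleFunc α (Measure β)) : Kernel α β := ⟨κ, κ.measurable⟩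

lemma isMarkovKernel_simpleKernel {κ : SimpleFunc α (Measure β)}
    (hκ : ∀ a, IsProbabilityMeasure (κ a)) : IsMarkovKernel (simpleKernel κ) := ⟨hκ⟩

lemma eLpNorm'_simpleFunc_lt_top {ν : Measure α} [IsFiniteMeasure ν] {p : ℝ} (hp : 0 < p)
    (w : SimpleFunc α ℝ≥0∞) (hw : ∀ a, w a < ∞) : eLpNorm' w p ν < ∞ := by
  refine ENNReal.rpow_lt_top_of_nonneg (by positivity) (ne_of_lt ?_)
  simp only [enorm_eq_self]
  change ∫⁻ a, (w.map (· ^ p)) a ∂ν < ∞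
  rw [SimpleFunc.lintegral_eq_lintegral, SimpleFunc.map_lintegral]
  refine ENNReal.sum_lt_top.2 fun r hr => ENNReal.mul_lt_top ?_ (measure_lt_top ν _)
  obtain ⟨a, rfl⟩ := SimpleFunc.mem_range.1 hr
  exact ENNReal.rpow_lt_top_of_nonneg hp.le (hw a).ne

end SimpleKernel

section Wasserstein

variable {d : ℕ} {p : ℝ} {μ ν μ₁ μ₂ : Measure (Ed d)}

/-- The transport cost `(∫ |y - x|^p γ(dx, dy))^{1/p}` of a coupling `γ`. -/
def transportCost (p : ℝ) (γ : Measure (Ed d × Ed d)) : ℝ≥0∞ :=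
  eLpNorm' (fun q : Ed d × Ed d => q.2 - q.1) p γ

/-- The `p`-Wasserstein distance with values in `[0, ∞]`; `Wp` is its truncation by `toReal`. -/
def eWp (p : ℝ) (μ ν : Measure (Ed d)) : ℝ≥0∞ :=
  ⨅ γ ∈ {γ : Measure (Ed d × Ed d) | IsCoupling γ μ ν}, transportCost p γ

lemma toNNReal_Wp (p : ℝ) (μ ν : Measure (Ed d)) :
    (Wp p μ ν).toNNReal = (eWp p μ ν).toNNReal :=
  Real.toNNReal_coe

lemma eWp_le_transportCost {γ : Measure (Ed d × Ed d)} (hγ : IsCoupling γ μ ν) :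
    eWp p μ ν ≤ transportCost p γ :=
  iInf₂_le γ hγ

lemma isCoupling_prod (μ ν : Measure (Ed d)) [IsProbabilityMeasure μ] [IsProbabilityMeasure ν] :
    IsCoupling (μ.prod ν) μ ν := by
  constructor <;> simp [Measure.map_fst_prod, Measure.map_snd_prod]

lemma IsCoupling.isProbabilityMeasure [hμ : IsProbabilityMeasure μ] {γ : Measure (Ed d × Ed d)}
    (hγ : IsCoupling γ μ ν) : IsProbabilityMeasure γ := by
  rw [← hγ.1] at hμ
  exact Measure.isProbabilityMeasure_of_map Prod.fst

lemma eWp_self (hp : 0 < p) (μ : Measure (Ed d)) : eWp p μ μ = 0 := by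
  have diagonal : IsCoupling (μ.map fun z => (z, z)) μ μ := by
    constructor <;> rw [Measure.map_map (by fun_prop) (by fun_prop)] <;> exact Measure.map_id
  refine le_antisymm ((eWp_le_transportCost diagonal).trans_eq ?_) zero_le
  rw [transportCost, eLpNorm', lintegral_map (by fun_prop) (by fun_prop)]
  simp [hp]

lemma MemPp.eLpNorm'_id_lt_top (hp : 0 ≤ p) (hμ : MemPp p μ) : eLpNorm' id p μ < ∞ :=
  ENNReal.rpow_lt_top_of_nonneg (by positivity) hμ.2.ne

lemma IsCoupling.transportCost_le (hp : 1 ≤ p) {γ : Measure (Ed d × Ed d)}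
    (hγ : IsCoupling γ μ ν) : transportCost p γ ≤ eLpNorm' id p ν + eLpNorm' id p μ := by
  have eLpNorm'_fst : eLpNorm' (fun q : Ed d × Ed d => -q.1) p γ = eLpNorm' id p μ := by
    simp_rw [← hγ.1, eLpNorm', enorm_neg]
    rw [lintegral_map (by fun_prop) measurable_fst]
    rfl
  have eLpNorm'_snd : eLpNorm' Prod.snd p γ = eLpNorm' id p ν := by
    simp_rw [← hγ.2, eLpNorm']
    rw [lintegral_map (by fun_prop) measurable_snd]
    rfl
  calc transportCost p γ
      = eLpNorm' (Prod.snd + fun q : Ed d × Ed d => -q.1) p γ := by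
        simp only [transportCost, sub_eq_add_neg]; rfl
    _ ≤ eLpNorm' Prod.snd p γ + eLpNorm' (fun q : Ed d × Ed d => -q.1) p γ :=
        eLpNorm'_add_le (by fun_prop) (by fun_prop) hp
    _ = eLpNorm' id p ν + eLpNorm' id p μ := by rw [eLpNorm'_snd, eLpNorm'_fst]

lemma eWp_lt_top (hp : 1 ≤ p) (hμ : MemPp p μ) (hν : MemPp p ν) : eWp p μ ν < ∞ := by
  have hp₀ : 0 ≤ p := by positivity
  have := hμ.1
  have := hν.1
  have prod_coupling := isCoupling_prod μ ν
  calc eWp p μ ν ≤ transportCost p (μ.prod ν) := eWp_le_transportCost prod_coupling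
    _ ≤ eLpNorm' id p ν + eLpNorm' id p μ := prod_coupling.transportCost_le hp
    _ < ∞ := ENNReal.add_lt_top.2 ⟨hν.eLpNorm'_id_lt_top hp₀, hμ.eLpNorm'_id_lt_top hp₀⟩

lemma coe_toNNReal_Wp (hp : 1 ≤ p) (hμ : MemPp p μ) (hν : MemPp p ν) :
    ((Wp p μ ν).toNNReal : ℝ≥0∞) = eWp p μ ν := by
  rw [toNNReal_Wp, ENNReal.coe_toNNReal (eWp_lt_top hp hμ hν).ne]

lemma exists_isCoupling_transportCost_le (h : eWp p μ ν < ∞) {ε : ℝ≥0∞} (hε : 0 < ε) :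
    ∃ γ, IsCoupling γ μ ν ∧ transportCost p γ ≤ eWp p μ ν + ε := by
  obtain ⟨γ, hlt⟩ := iInf_lt_iff.1 (ENNReal.lt_add_right h.ne hε.ne')
  obtain ⟨hγ, hcost⟩ := iInf_lt_iff.1 hlt
  exact ⟨γ, hγ, hcost.le⟩

lemma IsCoupling.convKernel [IsProbabilityMeasure μ₁] [IsProbabilityMeasure μ₂]
    {γ : Measure (Ed d × Ed d)} (hγ : IsCoupling γ μ₁ ν) {κ : Kernel (Ed d) (Ed d)}
    [IsSFiniteKernel κ] {π : Kernel (Ed d) (Ed d × Ed d)} [IsSFiniteKernel π]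
    (hπ : ∀ y, IsCoupling (π y) μ₂ (κ y)) :
    IsCoupling (convKernel γ (π.comap Prod.snd measurable_snd)) (μ₁.conv μ₂) (convKernel ν κ) := by
  have := hγ.isProbabilityMeasure
  constructor
  · rw [← convKernel_const, ← hγ.1]
    exact map_convKernel (AddMonoidHom.fst _ _) measurable_fst γ
      (π.comap Prod.snd measurable_snd) (Kernel.const _ μ₂) fun q => (hπ q.2).1
  · rw [← hγ.2]
    exact map_convKernel (AddMonoidHom.snd _ _) measurable_snd γ
      (π.comap Prod.snd measurable_snd) κ fun q => (hπ q.2).2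

lemma eWp_conv_convKernel_le_transportCost (hp : 1 ≤ p) [IsProbabilityMeasure μ₁]
    [IsProbabilityMeasure μ₂] {γ : Measure (Ed d × Ed d)} (hγ : IsCoupling γ μ₁ ν)
    {κ : Kernel (Ed d) (Ed d)} [IsSFiniteKernel κ] {π : Kernel (Ed d) (Ed d × Ed d)}
    (hπ : ∀ y, IsCoupling (π y) μ₂ (κ y)) :
    eWp p (μ₁.conv μ₂) (convKernel ν κ) ≤
      transportCost p γ + eLpNorm' (fun y => transportCost p (π y)) p ν := by
  have := hγ.isProbabilityMeasure
  have : IsMarkovKernel π := ⟨fun y => (hπ y).isProbabilityMeasure⟩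
  refine (eWp_le_transportCost (hγ.convKernel hπ)).trans ?_
  refine (eLpNorm'_convKernel_le hp (AddMonoidHom.snd (Ed d) (Ed d) - AddMonoidHom.fst _ _)
    (measurable_snd.sub measurable_fst) γ (π.comap Prod.snd measurable_snd)).trans_eq ?_
  have transportCost_measurable : Measurable fun y => transportCost p (π y) :=
    (Measurable.lintegral_kernel (by fun_prop)).pow_const _
  congr 1
  rw [← hγ.2]
  simp_rw [eLpNorm'_eq_lintegral_enorm, enorm_eq_self]
  rw [lintegral_map (by fun_prop) measurable_snd]
  rfl

lemma eWp_conv_convKernel_simpleKernel_le (hp : 1 ≤ p) (h₁ : MemPp p μ₁) (h₂ : MemPp p μ₂)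
    (hν : MemPp p ν) (κ : SimpleFunc (Ed d) (Measure (Ed d))) (hκ : ∀ y, MemPp p (κ y)) :
    eWp p (μ₁.conv μ₂) (convKernel ν (simpleKernel κ)) ≤
      eWp p μ₁ ν + eLpNorm' (fun y => eWp p μ₂ (κ y)) p ν := by
  have := h₁.1
  have := h₂.1
  have := hν.1
  have := isMarkovKernel_simpleKernel fun y => (hκ y).1
  refine ENNReal.le_of_forall_pos_le_add fun ε hε _ => ?_
  have hε₂ : (0 : ℝ≥0∞) < ε / 2 := ENNReal.half_pos (by exact_mod_cast hε.ne')
  obtain ⟨γ, hγ, hγ_cost⟩ := exists_isCoupling_transportCost_le (eWp_lt_top hp h₁ hν) hε₂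
  choose! ρ hρ hρ_cost using fun (m : Measure (Ed d)) (hm : MemPp p m) =>
    exists_isCoupling_transportCost_le (eWp_lt_top hp h₂ hm) hε₂
  have eWp_measurable : AEStronglyMeasurable (fun y => eWp p μ₂ (κ y)) ν :=
    (κ.map (eWp p μ₂)).measurable.aestronglyMeasurable
  calc eWp p (μ₁.conv μ₂) (convKernel ν (simpleKernel κ))
      ≤ transportCost p γ + eLpNorm' (fun y => transportCost p (ρ (κ y))) p ν :=
        eWp_conv_convKernel_le_transportCost hp hγ (π := simpleKernel (κ.map ρ))
          fun y => hρ _ (hκ y)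
    _ ≤ (eWp p μ₁ ν + ε / 2) +
          eLpNorm' ((fun y => eWp p μ₂ (κ y)) + fun _ => (ε / 2 : ℝ≥0∞)) p ν := by
        gcongr
        exact eLpNorm'_mono_enorm_ae (by positivity) (ae_of_all _ fun y => hρ_cost _ (hκ y))
    _ ≤ (eWp p μ₁ ν + ε / 2) + (eLpNorm' (fun y => eWp p μ₂ (κ y)) p ν + ε / 2) := by
        gcongr
        refine (eLpNorm'_add_le eWp_measurable aestronglyMeasurable_const hp).trans_eq ?_
        rw [eLpNorm'_const_of_isProbabilityMeasure _ (by positivity), enorm_eq_self]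
    _ = eWp p μ₁ ν + eLpNorm' (fun y => eWp p μ₂ (κ y)) p ν + ε := by
        rw [add_add_add_comm, ENNReal.add_halves]

lemma MemPp.convKernel (hp : 1 ≤ p) (hν : MemPp p ν)
    {κ : SimpleFunc (Ed d) (Measure (Ed d))} (hκ : ∀ y, MemPp p (κ y)) :
    MemPp p (convKernel ν (simpleKernel κ)) := by
  have hp₀ : 0 < p := by positivity
  have := hν.1
  have := isMarkovKernel_simpleKernel fun y => (hκ y).1
  refine ⟨inferInstance, lintegral_rpow_enorm_lt_top_of_eLpNorm'_lt_top (f := id) hp₀ ?_⟩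
  refine (eLpNorm'_convKernel_le hp (AddMonoidHom.id _) measurable_id ν _).trans_lt ?_
  exact ENNReal.add_lt_top.2 ⟨hν.eLpNorm'_id_lt_top hp₀.le,
    eLpNorm'_simpleFunc_lt_top hp₀ (κ.map (eLpNorm' id p))
      fun y => (hκ y).eLpNorm'_id_lt_top hp₀.le⟩

lemma MemPp.conv (hp : 1 ≤ p) (h₁ : MemPp p μ₁) (h₂ : MemPp p μ₂) : MemPp p (μ₁.conv μ₂) := by
  have := h₁.1
  have := h₂.1
  rw [← convKernel_const]
  exact h₁.convKernel hp (κ := SimpleFunc.const _ μ₂) fun _ => h₂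

end Wasserstein

section Penalty

variable {d : ℕ} {p s u : ℝ} {φ : ℝ≥0 → ℝ≥0∞}

lemma phit_of_pos (hu : 0 < u) (r : ℝ≥0) :
    phit φ u r = (u.toNNReal : ℝ≥0∞) * φ (r / u.toNNReal) :=
  if_pos hu

lemma IsPenalty.phit_zero (hφ : IsPenalty p φ) (u : ℝ) : phit φ u 0 = 0 := by
  simp [phit, hφ.map_zero]

lemma IsPenalty.phit_mono (hφ : IsPenalty p φ) (hu : 0 < u) : Monotone (phit φ u) := by
  intro a b hab
  simp_rw [phit_of_pos hu]
  gcongr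
  exact hφ.mono (by gcongr)

lemma IsPenalty.phit_add_le (hφ : IsPenalty p φ) (hs : 0 < s) (hu : 0 < u) (a b : ℝ≥0) :
    phit φ (s + u) (a + b) ≤ phit φ s a + phit φ u b := by
  rw [phit_of_pos (add_pos hs hu), phit_of_pos hs, phit_of_pos hu, Real.toNNReal_add hs.le hu.le]
  set σ := s.toNNReal
  set τ := u.toNNReal
  have hσ : σ ≠ 0 := (Real.toNNReal_pos.2 hs).ne'
  have hτ : τ ≠ 0 := (Real.toNNReal_pos.2 hu).ne'
  have hστ : σ + τ ≠ 0 := by positivity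
  have convex_combination : (a + b) / (σ + τ) =
      σ / (σ + τ) * (a / σ) + τ / (σ + τ) * (b / τ) := by
    field_simp
  calc ((σ + τ : ℝ≥0) : ℝ≥0∞) * φ ((a + b) / (σ + τ))
      ≤ ((σ + τ : ℝ≥0) : ℝ≥0∞) *
          (((σ / (σ + τ) : ℝ≥0) : ℝ≥0∞) * φ (a / σ) +
            ((τ / (σ + τ) : ℝ≥0) : ℝ≥0∞) * φ (b / τ)) := by
        gcongr
        rw [convex_combination]
        exact hφ.convex _ _ _ _ (by field_simp)
    _ = σ * φ (a / σ) + τ * φ (b / τ) := by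
        rw [mul_add, ← mul_assoc, ← mul_assoc, ← ENNReal.coe_mul, ← ENNReal.coe_mul,
          mul_div_cancel₀ _ hστ, mul_div_cancel₀ _ hστ]

lemma IsPenalty.convexOn_phit_rpow (hφ : IsPenalty p φ) (hp : 0 < p) (hu : 0 < u) :
    ConvexOn ℝ≥0 univ fun x : ℝ≥0 => phit φ u (x ^ (1 / p)) := by
  refine ⟨convex_univ, fun a _ b _ l m _ _ hlm => ?_⟩
  set τ := u.toNNReal
  have phit_rpow (x : ℝ≥0) : phit φ u (x ^ (1 / p)) = τ * φ ((x / τ ^ p) ^ (1 / p)) := by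
    rw [phit_of_pos hu, NNReal.div_rpow, ← NNReal.rpow_mul, mul_one_div_cancel hp.ne',
      NNReal.rpow_one]
  simp only [phit_rpow, ENNReal.smul_def, smul_eq_mul]
  calc (τ : ℝ≥0∞) * φ (((l * a + m * b) / τ ^ p) ^ (1 / p))
      = τ * φ ((l * (a / τ ^ p) + m * (b / τ ^ p)) ^ (1 / p)) := by
        rw [add_div, mul_div_assoc, mul_div_assoc]
    _ ≤ τ * (l * φ ((a / τ ^ p) ^ (1 / p)) + m * φ ((b / τ ^ p) ^ (1 / p))) := by
        gcongr
        exact hφ.convex_rpow _ _ _ _ hlm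
    _ = l * (τ * φ ((a / τ ^ p) ^ (1 / p))) + m * (τ * φ ((b / τ ^ p) ^ (1 / p))) := by ring

lemma IsPenalty.phit_eLpNorm'_le {α : Type*} [MeasurableSpace α] (hφ : IsPenalty p φ)
    (hp : 0 < p) (hu : 0 < u) (ν : Measure α) [IsProbabilityMeasure ν] (w : SimpleFunc α ℝ≥0) :
    phit φ u (eLpNorm' (fun a => (w a : ℝ≥0∞)) p ν).toNNReal ≤ ∫⁻ a, phit φ u (w a) ∂ν := by
  have jensen := map_lintegral_simpleFunc_le_of_convexOn (hφ.convexOn_phit_rpow hp hu) ν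
    (w.map (· ^ p))
  simp only [SimpleFunc.map_apply, ENNReal.coe_rpow_of_nonneg _ hp.le, ← NNReal.rpow_mul,
    mul_one_div_cancel hp.ne', NNReal.rpow_one] at jensen
  simpa only [eLpNorm', enorm_eq_self, ENNReal.toNNReal_rpow] using jensen

lemma IsPenalty.phit_Wp_conv_convKernel_le (hφ : IsPenalty p φ) (hp : 1 ≤ p) (hs : 0 < s)
    (hu : 0 < u) {μ₁ μ₂ ν : Measure (Ed d)} (h₁ : MemPp p μ₁) (h₂ : MemPp p μ₂) (hν : MemPp p ν)
    (κ : SimpleFunc (Ed d) (Measure (Ed d))) (hκ : ∀ y, MemPp p (κ y)) :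
    phit φ (s + u) (Wp p (μ₁.conv μ₂) (convKernel ν (simpleKernel κ))).toNNReal ≤
      phit φ s (Wp p μ₁ ν).toNNReal + ∫⁻ y, phit φ u (Wp p μ₂ (κ y)).toNNReal ∂ν := by
  have hp₀ : 0 < p := by positivity
  have := hν.1
  let w : SimpleFunc (Ed d) ℝ≥0 := κ.map fun m => (Wp p μ₂ m).toNNReal
  have coe_w (y : Ed d) : (w y : ℝ≥0∞) = eWp p μ₂ (κ y) := coe_toNNReal_Wp hp h₂ (hκ y)
  have w_norm_lt_top : eLpNorm' (fun y => (w y : ℝ≥0∞)) p ν < ∞ :=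
    eLpNorm'_simpleFunc_lt_top hp₀ (w.map ENNReal.ofNNReal) fun _ => ENNReal.coe_lt_top
  have triangle : (Wp p (μ₁.conv μ₂) (convKernel ν (simpleKernel κ))).toNNReal ≤
      (Wp p μ₁ ν).toNNReal + (eLpNorm' (fun y => (w y : ℝ≥0∞)) p ν).toNNReal := by
    rw [← ENNReal.coe_le_coe, ENNReal.coe_add, ENNReal.coe_toNNReal w_norm_lt_top.ne,
      coe_toNNReal_Wp hp h₁ hν, coe_toNNReal_Wp hp (h₁.conv hp h₂) (hν.convKernel hp hκ)]
    simp_rw [coe_w]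
    exact eWp_conv_convKernel_simpleKernel_le hp h₁ h₂ hν κ hκ
  calc phit φ (s + u) (Wp p (μ₁.conv μ₂) (convKernel ν (simpleKernel κ))).toNNReal
      ≤ phit φ (s + u)
          ((Wp p μ₁ ν).toNNReal + (eLpNorm' (fun y => (w y : ℝ≥0∞)) p ν).toNNReal) :=
        hφ.phit_mono (add_pos hs hu) triangle
    _ ≤ phit φ s (Wp p μ₁ ν).toNNReal +
          phit φ u (eLpNorm' (fun y => (w y : ℝ≥0∞)) p ν).toNNReal :=
        hφ.phit_add_le hs hu _ _
    _ ≤ phit φ s (Wp p μ₁ ν).toNNReal + ∫⁻ y, phit φ u (Wp p μ₂ (κ y)).toNNReal ∂ν := by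
        gcongr
        exact hφ.phit_eLpNorm'_le hp₀ hu ν w

end Penalty

section Selection

variable {α X ι γ : Type*}

lemma isLUB_range_partialSups [SemilatticeSup γ] {h : ℕ → γ} {b : γ} (hb : IsLUB (range h) b) :
    IsLUB (range (partialSups h)) b := by
  rwa [IsLUB, upperBounds_range_partialSups]

lemma exists_simpleFunc_apply_eq_partialSups [MeasurableSpace α] [LinearOrder γ]
    [TopologicalSpace γ] [OrderClosedTopology γ] [SecondCountableTopology γ] [MeasurableSpace γ]
    [BorelSpace γ] {h : ℕ → α → γ} (hh : ∀ n, Measurable (h n)) (n : ℕ) :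
    ∃ I : SimpleFunc α ℕ, ∀ a, h (I a) a = partialSups h n a := by
  induction n with
  | zero => exact ⟨SimpleFunc.const α 0, fun a => by simp⟩
  | succ n ih =>
    classical
    obtain ⟨I, hI⟩ := ih
    have partialSups_measurable : Measurable (partialSups h n) := by
      rw [partialSups_eq_sup'_range]
      exact Finset.measurable_range_sup' fun k _ => hh k
    refine ⟨SimpleFunc.piecewise {a | partialSups h n a ≤ h (n + 1) a}
      (measurableSet_le partialSups_measurable (hh (n + 1))) (SimpleFunc.const α (n + 1)) I,
      fun a => ?_⟩
    rw [partialSups_add_one, Pi.sup_apply, SimpleFunc.piecewise_apply]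
    split_ifs with ha
    · exact (sup_of_le_right ha).symm
    · rw [hI, sup_of_le_left (not_le.1 ha).le]

lemma integrable_partialSups [MeasurableSpace α] {ν : Measure α} {h : ℕ → α → ℝ}
    (hh : ∀ n, Integrable (h n) ν) (n : ℕ) : Integrable (partialSups h n) ν := by
  induction n with
  | zero => simpa using hh 0
  | succ n ih => simpa only [partialSups_add_one] using ih.sup (hh (n + 1))

lemma integral_isLUB_le_of_forall_simpleFunc [MeasurableSpace α] {ν : Measure α} {h : ℕ → α → ℝ}
    {g : α → ℝ} (hh_meas : ∀ n, Measurable (h n)) (hh : ∀ n, Integrable (h n) ν)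
    (hg : Integrable g ν) (hlub : ∀ a, IsLUB (range fun n => h n a) (g a)) {K : ℝ}
    (hK : ∀ I : SimpleFunc α ℕ, ∫ a, h (I a) a ∂ν ≤ K) : ∫ a, g a ∂ν ≤ K := by
  have partialSups_tendsto (a : α) : Tendsto (fun n => partialSups h n a) atTop (𝓝 (g a)) := by
    simp only [Pi.partialSups_apply]
    exact tendsto_atTop_isLUB (partialSups_monotone _) (isLUB_range_partialSups (hlub a))
  refine le_of_tendsto' (integral_tendsto_of_tendsto_of_monotone (integrable_partialSups hh) hg
    (ae_of_all _ fun a m n hmn => partialSups_monotone h hmn a)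
    (ae_of_all _ partialSups_tendsto)) fun n => ?_
  obtain ⟨I, hI⟩ := exists_simpleFunc_apply_eq_partialSups hh_meas n
  simpa only [hI] using hK I

lemma exists_seq_isLUB_of_lowerSemicontinuous [TopologicalSpace X] [HereditarilyLindelofSpace X]
    [LinearOrder γ] [TopologicalSpace γ] [OrderClosedTopology γ] [DenselyOrdered γ]
    [TopologicalSpace.SeparableSpace γ] {A : Set ι} (hA : A.Nonempty) {F : ι → X → γ} {g : X → γ}
    (hF : ∀ i ∈ A, LowerSemicontinuous (F i)) (hg : ∀ x, IsLUB ((fun i => F i x) '' A) (g x)) :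
    ∃ q : ℕ → ι, (∀ n, q n ∈ A) ∧ ∀ x, IsLUB (range fun n => F (q n) x) (g x) := by
  obtain ⟨i₀, hi₀⟩ := hA
  have isLUB_image : IsLUB (F '' A) g := by
    refine isLUB_pi.2 fun x => ?_
    rw [image_image]
    exact hg x
  obtain ⟨𝓕, h𝓕_sub, h𝓕_countable, h𝓕⟩ :=
    exists_countable_lowerSemicontinuous_isLUB (forall_mem_image.2 hF) isLUB_image
  have insert_sub : insert (F i₀) 𝓕 ⊆ F '' A :=
    insert_subset (mem_image_of_mem F hi₀) h𝓕_sub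
  obtain ⟨e, he⟩ := (h𝓕_countable.insert (F i₀)).exists_eq_range (insert_nonempty _ _)
  choose q hq hq_eq using fun n => insert_sub (he ▸ mem_range_self n)
  refine ⟨q, hq, fun x => ?_⟩
  have isLUB_range : IsLUB (range e) g :=
    he ▸ h𝓕.of_subset_of_superset isLUB_image (subset_insert _ _) insert_sub
  simp only [hq_eq]
  exact range_comp (Function.eval x) e ▸ isLUB_pi.1 isLUB_range x

end Selection

section Sop

variable {d : ℕ} {p s u : ℝ} {φ : ℝ≥0 → ℝ≥0∞} {μ μ₁ μ₂ : Measure (Ed d)}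

/-- The pairs `(ν, c)` over which the supremum `S(t)f(x)` is taken: `c` bounds the penalty
`φ_t(𝒲_p(μ, ν))` from above. Working with pairs keeps the payoff real valued although the penalty
may be infinite. -/
def admissible (p : ℝ) (φ : ℝ≥0 → ℝ≥0∞) (μ : Measure (Ed d)) (t : ℝ) :
    Set (Measure (Ed d) × ℝ) :=
  {q | MemPp p q.1 ∧ 0 ≤ q.2 ∧ phit φ t (Wp p μ q.1).toNNReal ≤ ENNReal.ofReal q.2}

/-- The expected value `∫ f(x + y) ν(dy) - c` of a pair `q = (ν, c)`, which `S(t)f(x)` maximises. -/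
def payoff (f : Ed d → ℝ) (q : Measure (Ed d) × ℝ) (x : Ed d) : ℝ :=
  (∫ y, f (x + y) ∂q.1) - q.2

/-- First move by `y ~ q.1` at cost `q.2`, then according to `σ y`: the resulting law and the
expected total cost. -/
def glue (q : Measure (Ed d) × ℝ) (σ : SimpleFunc (Ed d) (Measure (Ed d) × ℝ)) :
    Measure (Ed d) × ℝ :=
  (convKernel q.1 (simpleKernel (σ.map Prod.fst)), q.2 + ∫ y, (σ y).2 ∂q.1)

lemma Sop_eq_sSup_image (f : Ed d → ℝ) (x : Ed d) :
    Sop p φ μ u f x = sSup ((fun q => payoff f q x) '' admissible p φ μ u) := by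
  rw [Sop]
  congr 1
  ext r
  simp only [admissible, payoff, mem_image, Prod.exists, mem_ofPred_eq]
  constructor
  · rintro ⟨ν, hν, c, hc, hle, rfl⟩
    exact ⟨ν, c, ⟨hν, hc, hle⟩, rfl⟩
  · rintro ⟨ν, c, ⟨hν, hc, hle⟩, rfl⟩
    exact ⟨ν, hν, c, hc, hle, rfl⟩

lemma mk_zero_mem_admissible (hp : 0 < p) (hφ : IsPenalty p φ) (hμ : MemPp p μ) :
    (μ, 0) ∈ admissible p φ μ u := by
  refine ⟨hμ, le_rfl, ?_⟩
  simp [toNNReal_Wp, eWp_self hp, hφ.phit_zero]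

lemma Sop_le (hp : 0 < p) (hφ : IsPenalty p φ) (hμ : MemPp p μ) {f : Ed d → ℝ} {x : Ed d} {K : ℝ}
    (hK : ∀ q ∈ admissible p φ μ u, payoff f q x ≤ K) : Sop p φ μ u f x ≤ K := by
  rw [Sop_eq_sSup_image]
  exact csSup_le (.image _ ⟨_, mk_zero_mem_admissible hp hφ hμ⟩) (forall_mem_image.2 hK)

section BoundedContinuous

variable (f : Ed d →ᵇ ℝ) {q : Measure (Ed d) × ℝ}

lemma abs_integral_add_le (ν : Measure (Ed d)) [IsProbabilityMeasure ν] (x : Ed d) :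
    |∫ y, f (x + y) ∂ν| ≤ ‖f‖ := by
  simpa using norm_integral_le_of_norm_le_const (ae_of_all ν fun y => f.norm_coe_le_norm (x + y))

lemma continuous_payoff [IsFiniteMeasure q.1] : Continuous (payoff f q) :=
  (continuous_of_dominated (fun x => by fun_prop)
    (fun x => ae_of_all q.1 fun y => f.norm_coe_le_norm (x + y)) (integrable_const _)
    (ae_of_all q.1 fun y => by fun_prop)).sub continuous_const

lemma integrable_payoff_add [IsProbabilityMeasure q.1] (ν : Measure (Ed d)) [IsFiniteMeasure ν]
    (x : Ed d) : Integrable (fun y => payoff f q (x + y)) ν :=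
  .of_bound ((continuous_payoff f).comp (continuous_const_add x)).aestronglyMeasurable
    (‖f‖ + |q.2|) (ae_of_all ν fun y => (abs_sub _ _).trans
      (add_le_add_left (abs_integral_add_le f q.1 (x + y)) _))

lemma payoff_le_norm (hq : q ∈ admissible p φ μ u) (x : Ed d) : payoff f q x ≤ ‖f‖ := by
  have := hq.1.1
  have := (abs_le.1 (abs_integral_add_le f q.1 x)).2
  linarith [hq.2.1, show payoff f q x = (∫ y, f (x + y) ∂q.1) - q.2 from rfl]

lemma isLUB_Sop (hp : 0 < p) (hφ : IsPenalty p φ) (hμ : MemPp p μ) (x : Ed d) :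
    IsLUB ((fun q => payoff f q x) '' admissible p φ μ u) (Sop p φ μ u f x) := by
  rw [Sop_eq_sSup_image]
  exact isLUB_csSup (.image _ ⟨_, mk_zero_mem_admissible hp hφ hμ⟩)
    ⟨‖f‖, forall_mem_image.2 fun _ hq => payoff_le_norm f hq x⟩

lemma payoff_le_Sop (hp : 0 < p) (hφ : IsPenalty p φ) (hμ : MemPp p μ)
    (hq : q ∈ admissible p φ μ u) (x : Ed d) : payoff f q x ≤ Sop p φ μ u f x :=
  (isLUB_Sop f hp hφ hμ x).1 (mem_image_of_mem _ hq)

lemma abs_Sop_le_norm (hp : 0 < p) (hφ : IsPenalty p φ) (hμ : MemPp p μ) (x : Ed d) :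
    |Sop p φ μ u f x| ≤ ‖f‖ := by
  have := hμ.1
  refine abs_le.2 ⟨?_, Sop_le hp hφ hμ fun q hq => payoff_le_norm f hq x⟩
  calc -‖f‖ ≤ ∫ y, f (x + y) ∂μ := (abs_le.1 (abs_integral_add_le f μ x)).1
    _ = payoff f (μ, 0) x := (sub_zero _).symm
    _ ≤ Sop p φ μ u f x := payoff_le_Sop f hp hφ hμ (mk_zero_mem_admissible hp hφ hμ) x

lemma exists_seq_admissible_isLUB_Sop (hp : 0 < p) (hφ : IsPenalty p φ) (hμ : MemPp p μ) :
    ∃ q : ℕ → Measure (Ed d) × ℝ, (∀ n, q n ∈ admissible p φ μ u) ∧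
      ∀ x, IsLUB (range fun n => payoff f (q n) x) (Sop p φ μ u f x) := by
  refine exists_seq_isLUB_of_lowerSemicontinuous ⟨_, mk_zero_mem_admissible hp hφ hμ⟩
    (fun q hq => ?_) (isLUB_Sop f hp hφ hμ)
  have := hq.1.1
  exact (continuous_payoff f).lowerSemicontinuous

lemma measurable_Sop (hp : 0 < p) (hφ : IsPenalty p φ) (hμ : MemPp p μ) :
    Measurable (Sop p φ μ u f) := by
  obtain ⟨q, hq, hlub⟩ := exists_seq_admissible_isLUB_Sop f (u := u) hp hφ hμ
  refine Measurable.isLUB (fun n => ?_) hlub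
  have := (hq n).1.1
  exact (continuous_payoff f).measurable

lemma integrable_Sop_add (hp : 0 < p) (hφ : IsPenalty p φ) (hμ : MemPp p μ) (ν : Measure (Ed d))
    [IsFiniteMeasure ν] (x : Ed d) : Integrable (fun y => Sop p φ μ u f (x + y)) ν :=
  .of_bound ((measurable_Sop f hp hφ hμ).comp (measurable_const_add x)).aestronglyMeasurable
    ‖f‖ (ae_of_all ν fun y => abs_Sop_le_norm f hp hφ hμ (x + y))

lemma payoff_glue [IsProbabilityMeasure q.1] {σ : SimpleFunc (Ed d) (Measure (Ed d) × ℝ)}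
    (hσ : ∀ y, IsProbabilityMeasure (σ y).1) (x : Ed d) :
    payoff f (glue q σ) x = (∫ y, payoff f (σ y) (x + y) ∂q.1) - q.2 := by
  have : IsMarkovKernel (simpleKernel (σ.map Prod.fst)) := isMarkovKernel_simpleKernel hσ
  have shift_integrable : Integrable (fun a => f (x + a))
      (convKernel q.1 (simpleKernel (σ.map Prod.fst))) :=
    (f.compContinuous ⟨(x + ·), by fun_prop⟩).integrable _
  have cost_integrable : Integrable (fun y => (σ y).2) q.1 :=
    (σ.map Prod.snd).integrable_of_isFiniteMeasure
  have inner_integrable : Integrable (fun y => ∫ z, f (x + y + z) ∂(σ y).1) q.1 := by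
    simp only [add_assoc]
    exact integrable_integral_add_of_integrable_convKernel shift_integrable
  calc payoff f (glue q σ) x
      = (∫ y, ∫ z, f (x + (y + z)) ∂(σ y).1 ∂q.1) - (q.2 + ∫ y, (σ y).2 ∂q.1) :=
        congrArg (· - _) (integral_convKernel shift_integrable)
    _ = (∫ y, ∫ z, f (x + y + z) ∂(σ y).1 ∂q.1) - (∫ y, (σ y).2 ∂q.1) - q.2 := by
        simp only [← add_assoc]
        ring
    _ = (∫ y, payoff f (σ y) (x + y) ∂q.1) - q.2 := by
        rw [← integral_sub inner_integrable cost_integrable]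
        rfl

end BoundedContinuous

lemma glue_mem_admissible (hp : 1 ≤ p) (hφ : IsPenalty p φ) (hs : 0 < s) (hu : 0 < u)
    (h₁ : MemPp p μ₁) (h₂ : MemPp p μ₂) {q : Measure (Ed d) × ℝ} (hq : q ∈ admissible p φ μ₁ s)
    {σ : SimpleFunc (Ed d) (Measure (Ed d) × ℝ)} (hσ : ∀ y, σ y ∈ admissible p φ μ₂ u) :
    glue q σ ∈ admissible p φ (μ₁.conv μ₂) (s + u) := by
  have := hq.1.1
  have cost_nonneg (y : Ed d) : 0 ≤ (σ y).2 := (hσ y).2.1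
  have cost_integrable : Integrable (fun y => (σ y).2) q.1 :=
    (σ.map Prod.snd).integrable_of_isFiniteMeasure
  refine ⟨hq.1.convKernel hp fun y => (hσ y).1,
    add_nonneg hq.2.1 (integral_nonneg cost_nonneg), ?_⟩
  calc phit φ (s + u) (Wp p (μ₁.conv μ₂) (glue q σ).1).toNNReal
      ≤ phit φ s (Wp p μ₁ q.1).toNNReal + ∫⁻ y, phit φ u (Wp p μ₂ (σ y).1).toNNReal ∂q.1 :=
        hφ.phit_Wp_conv_convKernel_le hp hs hu h₁ h₂ hq.1 (σ.map Prod.fst) fun y => (hσ y).1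
    _ ≤ ENNReal.ofReal q.2 + ∫⁻ y, ENNReal.ofReal (σ y).2 ∂q.1 := by
        gcongr with y
        · exact hq.2.2
        · exact (hσ y).2.2
    _ = ENNReal.ofReal (glue q σ).2 := by
        rw [← ofReal_integral_eq_lintegral_ofReal cost_integrable (ae_of_all _ cost_nonneg),
          ← ENNReal.ofReal_add hq.2.1 (integral_nonneg cost_nonneg)]
        rfl

end Sop

theorem stmt_5_general {d : ℕ} {p s u : ℝ} {φ : ℝ≥0 → ℝ≥0∞} {μ₁ μ₂ : Measure (Ed d)} (hp : 1 ≤ p)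
    (hφ : IsPenalty p φ) (h₁ : MemPp p μ₁) (h₂ : MemPp p μ₂) (hs : 0 < s) (hu : 0 < u)
    (f : Ed d →ᵇ ℝ) (x : Ed d) :
    Sop p φ μ₁ s (Sop p φ μ₂ u f) x ≤ Sop p φ (μ₁.conv μ₂) (s + u) f x := by
  have hp₀ : 0 < p := by positivity
  refine Sop_le hp₀ hφ h₁ fun q hq => sub_le_iff_le_add.2 ?_
  have := hq.1.1
  obtain ⟨r, hr, hlub⟩ := exists_seq_admissible_isLUB_Sop f (u := u) hp₀ hφ h₂
  have (n : ℕ) := (hr n).1.1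
  refine integral_isLUB_le_of_forall_simpleFunc (h := fun n y => payoff f (r n) (x + y))
    (fun n => (continuous_payoff f).measurable.comp (measurable_const_add x))
    (fun n => integrable_payoff_add f q.1 x) (integrable_Sop_add f hp₀ hφ h₂ q.1 x)
    (fun y => hlub (x + y)) fun I => ?_
  have glued := glue_mem_admissible hp hφ hs hu h₁ h₂ hq (σ := I.map r) fun y => hr (I y)
  calc ∫ y, payoff f (r (I y)) (x + y) ∂q.1
      = payoff f (glue q (I.map r)) x + q.2 := by
        rw [payoff_glue f fun y => (hr (I y)).1.1, sub_add_cancel]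
        rfl
    _ ≤ Sop p φ (μ₁.conv μ₂) (s + u) f x + q.2 := by
        gcongr
        exact payoff_le_Sop f hp₀ hφ (h₁.conv hp h₂) glued x

/-- key lemma: `S(s)(S(t−s)f) ≤ S(t)f` for `0 < s < t`. -/
theorem stmt_5 (d : ℕ) (hd : 1 ≤ d) (p : ℝ) (hp : 1 < p)
    (φ : ℝ≥0 → ℝ≥0∞) (hφ : IsPenalty p φ)
    (μ : ℝ → Measure (Ed d)) (hμ : IsConvSemigroup p μ)
    (s t : ℝ) (hs : 0 < s) (hst : s < t) (f : C₀(Ed d, ℝ)) (x : Ed d) :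
    Sop p φ (μ s) s (Sop p φ (μ (t - s)) (t - s) (⇑f)) x ≤ Sop p φ (μ t) t (⇑f) x := by
  have hts : 0 < t - s := sub_pos.2 hst
  have key := stmt_5_general hp.le hφ (hμ.2.2 s hs.le) (hμ.2.2 (t - s) hts.le) hs hts f.toBCF x
  rwa [← hμ.2.1 s (t - s) hs.le hts.le, add_sub_cancel] at key
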